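/- Let S be a finite nonempty type, p ∈ (0,1), m ≥ 1, and ρ : S → ℕ a rank function with 1 ≤ ρ(t) ≤ m for all t ∈ S. Define weights w(t) = 1 − p^(2·ρ(t)) and γ = (1 − p^(2m−1))/(1 − p^(2m)). Fix a state s with ρ(s) ≥ 2, a nonempty finite action set A, for each a ∈ A a nonempty set 𝒫(a) of probability distributions on S and a reward r(a) ∈ ℝ. Suppose that for every a ∈ A and every P ∈ 𝒫(a) there exists t ∈ S with P(t) ≥ p and ρ(t) < ρ(s). Then for all V, W : S → ℝ: | max_{a∈A} inf_{P∈𝒫(a)} ( r(a) + ∑_{t} P(t)·V(t) ) − max_{a∈A} inf_{P∈𝒫(a)} ( r(a) + ∑_{t} P(t)·W(t) ) | ≤ γ · w(s) · max_{t ∈ S} ( |V(t) − W(t)| / w(t) ). -/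

import Mathlib

/-!
If `P ≥ 0` has `w`-mean `∑ t, P t * w t ≤ c`, then `V ↦ ∑ t, P t * V t` has norm at most `c` with
respect to the `w`-weighted supremum norm, and infima over `P` and suprema over actions preserve
this Lipschitz bound. For `w t = 1 - p ^ (2 * ρ t)`, reaching a rank below `k` with mass at least
`p` lowers the mean from `1` by at least `p * p ^ (2 * (k - 1)) = p ^ (2 * k - 1)`. The ratio of
`1 - p ^ (2 * k - 1)` to `1 - p ^ (2 * k)` increases with `k`, so its value at the top rank `m`
bounds all of them.
-/

open Set

section ShiftedExtrema

variable {ι α : Type*} [ConditionallyCompleteLattice α] {s : Set ι} {f g : ι → α} {c : α}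

theorem csSup_image_le_csSup_image_add [Add α] [AddRightMono α] (hs : s.Nonempty)
    (hg : BddAbove (g '' s)) (h : ∀ x ∈ s, f x ≤ g x + c) :
    sSup (f '' s) ≤ sSup (g '' s) + c := by
  refine csSup_le (hs.image f) (forall_mem_image.2 fun x hx => (h x hx).trans ?_)
  gcongr
  exact le_csSup hg (mem_image_of_mem g hx)

theorem csInf_image_le_csInf_image_add [AddGroup α] [AddRightMono α] (hs : s.Nonempty)
    (hf : BddBelow (f '' s)) (h : ∀ x ∈ s, f x ≤ g x + c) :
    sInf (f '' s) ≤ sInf (g '' s) + c := by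
  refine sub_le_iff_le_add.1 (le_csInf (hs.image g) (forall_mem_image.2 fun x hx => ?_))
  exact sub_le_iff_le_add.2 ((csInf_le hf (mem_image_of_mem f hx)).trans (h x hx))

end ShiftedExtrema

section WeightedSupNorm

variable {S : Type*} [Fintype S]

/-- The supremum norm of `V` with weights `w`, so that `weightedSupNorm w (V - W)` is the distance
`d_w(V, W)`. It is meaningful for positive `w` only, because `x / 0 = 0`. -/
noncomputable def weightedSupNorm [Nonempty S] (w V : S → ℝ) : ℝ :=
  Finset.univ.sup' Finset.univ_nonempty fun t => |V t| / w t

/-- The nonnegative vectors of `w`-mean at most `c`, that is, the transition vectors satisfying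
the drift condition for the weight `w`. They need not have total mass one. -/
def driftSet (w : S → ℝ) (c : ℝ) : Set (S → ℝ) :=
  {P | (∀ t, 0 ≤ P t) ∧ ∑ t, P t * w t ≤ c}

variable [Nonempty S] {w : S → ℝ} {c : ℝ} {P : S → ℝ}

theorem weightedSupNorm_sub_comm (w V W : S → ℝ) :
    weightedSupNorm w (V - W) = weightedSupNorm w (W - V) := by
  simp only [weightedSupNorm, Pi.sub_apply, abs_sub_comm]

theorem abs_le_weightedSupNorm_mul (V : S → ℝ) {t : S} (hw : 0 < w t) :
    |V t| ≤ weightedSupNorm w V * w t :=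
  (div_le_iff₀ hw).1 (Finset.le_sup' (fun t => |V t| / w t) (Finset.mem_univ t))

theorem weightedSupNorm_nonneg (hw : ∀ t, 0 < w t) (V : S → ℝ) : 0 ≤ weightedSupNorm w V := by
  obtain ⟨t⟩ := ‹Nonempty S›
  have h : 0 ≤ weightedSupNorm w V * w t :=
    (abs_nonneg _).trans (abs_le_weightedSupNorm_mul V (hw t))
  exact nonneg_of_mul_nonneg_left h (hw t)

theorem abs_sum_mul_le_mul_weightedSupNorm (hw : ∀ t, 0 < w t) (hP : P ∈ driftSet w c)
    (V : S → ℝ) : |∑ t, P t * V t| ≤ c * weightedSupNorm w V := by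
  obtain ⟨hP0, hPw⟩ := hP
  calc |∑ t, P t * V t| ≤ ∑ t, |P t * V t| := Finset.abs_sum_le_sum_abs _ _
    _ = ∑ t, P t * |V t| := by simp only [abs_mul, abs_of_nonneg (hP0 _)]
    _ ≤ ∑ t, P t * (weightedSupNorm w V * w t) := by
      gcongr with t
      · exact hP0 t
      · exact abs_le_weightedSupNorm_mul V (hw t)
    _ = (∑ t, P t * w t) * weightedSupNorm w V := by
      rw [Finset.sum_mul]
      exact Finset.sum_congr rfl fun t _ => by ring
    _ ≤ c * weightedSupNorm w V :=
      mul_le_mul_of_nonneg_right hPw (weightedSupNorm_nonneg hw V)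

theorem sum_mul_le_sum_mul_add (hw : ∀ t, 0 < w t) (hP : P ∈ driftSet w c) (V W : S → ℝ) :
    ∑ t, P t * V t ≤ ∑ t, P t * W t + c * weightedSupNorm w (V - W) := by
  have h := (le_abs_self _).trans (abs_sum_mul_le_mul_weightedSupNorm hw hP (V - W))
  simp only [Pi.sub_apply, mul_sub, Finset.sum_sub_distrib] at h
  linarith

end WeightedSupNorm

section RobustBellman

variable {S Act : Type*} [Fintype S]

/-- The worst-case value `inf_{P ∈ U} (x + ∑ t, P t * V t)` of an action with immediate reward `x`
and uncertainty set `U`, when `V` is the continuation value. -/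
noncomputable def robustActionValue (x : ℝ) (U : Set (S → ℝ)) (V : S → ℝ) : ℝ :=
  sInf ((fun P => x + ∑ t, P t * V t) '' U)

/-- The robust Bellman operator at a single state with available actions `A`, uncertainty sets `U`
and rewards `r`. The maximum over actions is a supremum, so that `A` may be infinite. -/
noncomputable def robustBellman (A : Set Act) (U : Act → Set (S → ℝ)) (r : Act → ℝ)
    (V : S → ℝ) : ℝ :=
  sSup ((fun a => robustActionValue (r a) (U a) V) '' A)

variable [Nonempty S] {w : S → ℝ} {c : ℝ}

theorem bddBelow_image_add_sum_mul (hw : ∀ t, 0 < w t) {U : Set (S → ℝ)} (hU : U ⊆ driftSet w c)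
    (x : ℝ) (V : S → ℝ) : BddBelow ((fun P => x + ∑ t, P t * V t) '' U) := by
  refine ⟨x + -(c * weightedSupNorm w V), forall_mem_image.2 fun P hP => ?_⟩
  gcongr
  exact neg_le_of_abs_le (abs_sum_mul_le_mul_weightedSupNorm hw (hU hP) V)

theorem robustActionValue_le (hw : ∀ t, 0 < w t) {U : Set (S → ℝ)} (hne : U.Nonempty)
    (hU : U ⊆ driftSet w c) (x : ℝ) (V : S → ℝ) :
    robustActionValue x U V ≤ x + c * weightedSupNorm w V := by
  obtain ⟨P, hP⟩ := hne
  refine csInf_le_of_le (bddBelow_image_add_sum_mul hw hU x V) (mem_image_of_mem _ hP) ?_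
  gcongr
  exact le_of_abs_le (abs_sum_mul_le_mul_weightedSupNorm hw (hU hP) V)

theorem robustActionValue_le_add (hw : ∀ t, 0 < w t) {U : Set (S → ℝ)} (hne : U.Nonempty)
    (hU : U ⊆ driftSet w c) (x : ℝ) (V W : S → ℝ) :
    robustActionValue x U V ≤ robustActionValue x U W + c * weightedSupNorm w (V - W) := by
  refine csInf_image_le_csInf_image_add hne (bddBelow_image_add_sum_mul hw hU x V) fun P hP => ?_
  rw [add_assoc]
  gcongr
  exact sum_mul_le_sum_mul_add hw (hU hP) V W

variable {A : Set Act} {U : Act → Set (S → ℝ)} {r : Act → ℝ}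

theorem bddAbove_image_robustActionValue (hw : ∀ t, 0 < w t) (hr : BddAbove (r '' A))
    (hne : ∀ a ∈ A, (U a).Nonempty) (hU : ∀ a ∈ A, U a ⊆ driftSet w c) (V : S → ℝ) :
    BddAbove ((fun a => robustActionValue (r a) (U a) V) '' A) := by
  obtain ⟨R, hR⟩ := hr
  refine ⟨R + c * weightedSupNorm w V, forall_mem_image.2 fun a ha => ?_⟩
  refine (robustActionValue_le hw (hne a ha) (hU a ha) (r a) V).trans ?_
  gcongr
  exact hR (mem_image_of_mem r ha)

theorem robustBellman_le_add (hw : ∀ t, 0 < w t) (hA : A.Nonempty) (hr : BddAbove (r '' A))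
    (hne : ∀ a ∈ A, (U a).Nonempty) (hU : ∀ a ∈ A, U a ⊆ driftSet w c) (V W : S → ℝ) :
    robustBellman A U r V ≤ robustBellman A U r W + c * weightedSupNorm w (V - W) :=
  csSup_image_le_csSup_image_add hA (bddAbove_image_robustActionValue hw hr hne hU W)
    fun a ha => robustActionValue_le_add hw (hne a ha) (hU a ha) (r a) V W

theorem abs_robustBellman_sub_le (hw : ∀ t, 0 < w t) (hA : A.Nonempty) (hr : BddAbove (r '' A))
    (hne : ∀ a ∈ A, (U a).Nonempty) (hU : ∀ a ∈ A, U a ⊆ driftSet w c) (V W : S → ℝ) :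
    |robustBellman A U r V - robustBellman A U r W| ≤ c * weightedSupNorm w (V - W) := by
  refine abs_sub_le_iff.2 ⟨?_, ?_⟩
  · exact sub_le_iff_le_add'.2 (robustBellman_le_add hw hA hr hne hU V W)
  · rw [weightedSupNorm_sub_comm]
    exact sub_le_iff_le_add'.2 (robustBellman_le_add hw hA hr hne hU W V)

end RobustBellman

section RankWeight

/-- The weight `w` attached to the rank function `ρ`. -/
def rankWeight {S : Type*} (p : ℝ) (ρ : S → ℕ) (t : S) : ℝ :=
  1 - p ^ (2 * ρ t)

/-- The contraction factor `γ` for ranks up to `m`, where `m` is positive: at `m = 0` the quotient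
is `0 / 0`. -/
noncomputable def rankContractionFactor (p : ℝ) (m : ℕ) : ℝ :=
  (1 - p ^ (2 * m - 1)) / (1 - p ^ (2 * m))

theorem monotone_one_sub_pow_div_one_sub_pow_succ {p : ℝ} (hp0 : 0 ≤ p) (hp1 : p < 1) :
    Monotone fun n : ℕ => (1 - p ^ n) / (1 - p ^ (n + 1)) := by
  intro j n hjn
  have hpos (i : ℕ) : 0 < 1 - p ^ (i + 1) := sub_pos.2 (pow_lt_one₀ hp0 hp1 i.succ_ne_zero)
  have hpow : p ^ n ≤ p ^ j := pow_le_pow_of_le_one hp0 hp1.le hjn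
  have hcross : (1 - p ^ n) * (1 - p ^ (j + 1)) - (1 - p ^ j) * (1 - p ^ (n + 1)) =
      (1 - p) * (p ^ j - p ^ n) := by ring
  have hcross_nonneg : 0 ≤ (1 - p) * (p ^ j - p ^ n) :=
    mul_nonneg (sub_nonneg.2 hp1.le) (sub_nonneg.2 hpow)
  exact (div_le_div_iff₀ (hpos j) (hpos n)).2 (by linarith)

variable {S : Type*} {p : ℝ} {ρ : S → ℕ}

theorem rankWeight_pos (hp0 : 0 ≤ p) (hp1 : p < 1) {t : S} (ht : 1 ≤ ρ t) :
    0 < rankWeight p ρ t :=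
  sub_pos.2 (pow_lt_one₀ hp0 hp1 (by omega))

theorem one_sub_pow_le_rankContractionFactor_mul (hp0 : 0 ≤ p) (hp1 : p < 1) {m : ℕ} {s : S}
    (hs1 : 1 ≤ ρ s) (hsm : ρ s ≤ m) :
    1 - p ^ (2 * ρ s - 1) ≤ rankContractionFactor p m * rankWeight p ρ s := by
  rw [← div_le_iff₀ (rankWeight_pos hp0 hp1 hs1), rankWeight, rankContractionFactor]
  have h := monotone_one_sub_pow_div_one_sub_pow_succ hp0 hp1
    (show 2 * ρ s - 1 ≤ 2 * m - 1 by omega)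
  simpa only [show 2 * ρ s - 1 + 1 = 2 * ρ s by omega, show 2 * m - 1 + 1 = 2 * m by omega] using h

variable [Fintype S] {P : S → ℝ}

theorem sum_mul_one_sub_le_one_sub_mul (hP0 : ∀ t, 0 ≤ P t) (hP1 : ∑ t, P t ≤ 1) {f : S → ℝ}
    (hf : ∀ t, 0 ≤ f t) (t : S) : ∑ u, P u * (1 - f u) ≤ 1 - P t * f t := by
  simp only [mul_sub, mul_one, Finset.sum_sub_distrib]
  exact sub_le_sub hP1 (Finset.single_le_sum (f := fun u => P u * f u)
    (fun u _ => mul_nonneg (hP0 u) (hf u)) (Finset.mem_univ t))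

theorem sum_mul_rankWeight_le (hp0 : 0 ≤ p) (hp1 : p ≤ 1) (hP0 : ∀ t, 0 ≤ P t)
    (hP1 : ∑ t, P t ≤ 1) {k : ℕ} {t : S} (hpt : p ≤ P t) (htk : ρ t < k) :
    ∑ u, P u * rankWeight p ρ u ≤ 1 - p ^ (2 * k - 1) := by
  have hreached : p ^ (2 * k - 1) ≤ P t * p ^ (2 * ρ t) :=
    calc p ^ (2 * k - 1) ≤ p ^ (2 * ρ t + 1) := pow_le_pow_of_le_one hp0 hp1 (by omega)
      _ = p * p ^ (2 * ρ t) := pow_succ' p _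
      _ ≤ P t * p ^ (2 * ρ t) := by gcongr
  exact (sum_mul_one_sub_le_one_sub_mul hP0 hP1 (fun u => pow_nonneg hp0 _) t).trans
    (sub_le_sub_left hreached 1)

theorem mem_driftSet_rankWeight (hp0 : 0 ≤ p) (hp1 : p < 1) {m : ℕ} {s : S} (hsm : ρ s ≤ m)
    (hP0 : ∀ t, 0 ≤ P t) (hP1 : ∑ t, P t ≤ 1) (hreach : ∃ t, p ≤ P t ∧ ρ t < ρ s) :
    P ∈ driftSet (rankWeight p ρ) (rankContractionFactor p m * rankWeight p ρ s) := by
  obtain ⟨t, hpt, hts⟩ := hreach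
  exact ⟨hP0, (sum_mul_rankWeight_le hp0 hp1.le hP0 hP1 hpt hts).trans
    (one_sub_pow_le_rankContractionFactor_mul hp0 hp1 (by omega) hsm)⟩

end RankWeight

theorem stmt_14_general {S Act : Type*} [Fintype S] [Nonempty S] {p : ℝ} (hp0 : 0 ≤ p)
    (hp1 : p < 1) {m : ℕ} {ρ : S → ℕ} (hρ1 : ∀ t, 1 ≤ ρ t) {s : S} (hsm : ρ s ≤ m)
    {A : Set Act} (hA : A.Nonempty) {U : Act → Set (S → ℝ)} (hne : ∀ a ∈ A, (U a).Nonempty)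
    (hU0 : ∀ a ∈ A, ∀ P ∈ U a, ∀ t, 0 ≤ P t) (hU1 : ∀ a ∈ A, ∀ P ∈ U a, ∑ t, P t ≤ 1)
    {r : Act → ℝ} (hr : BddAbove (r '' A))
    (hreach : ∀ a ∈ A, ∀ P ∈ U a, ∃ t, p ≤ P t ∧ ρ t < ρ s) (V W : S → ℝ) :
    |robustBellman A U r V - robustBellman A U r W| ≤
      rankContractionFactor p m * rankWeight p ρ s * weightedSupNorm (rankWeight p ρ) (V - W) :=
  abs_robustBellman_sub_le (fun t => rankWeight_pos hp0 hp1 (hρ1 t)) hA hr hne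
    (fun a ha P hP =>
      mem_driftSet_rankWeight hp0 hp1 hsm (hU0 a ha P hP) (hU1 a ha P hP) (hreach a ha P hP)) V W

/-- Single-state contraction estimate for the robust Bellman operator with respect to the
weighted supremum metric, at a state of rank at least 2 all of whose actions and
distributions reach a lower-rank state with probability at least `p`. -/
theorem stmt_14 (S : Type*) [Fintype S] [Nonempty S]
    (p : ℝ) (hp0 : 0 < p) (hp1 : p < 1)
    (m : ℕ) (hm : 1 ≤ m)
    (ρ : S → ℕ) (hρ1 : ∀ t, 1 ≤ ρ t) (hρm : ∀ t, ρ t ≤ m)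
    (w : S → ℝ) (hw : ∀ t, w t = 1 - p ^ (2 * ρ t))
    (γ : ℝ) (hγ : γ = (1 - p ^ (2 * m - 1)) / (1 - p ^ (2 * m)))
    (s : S) (hs : 2 ≤ ρ s)
    (Act : Type*) (A : Finset Act) (hA : A.Nonempty)
    (Unc : Act → Set (S → ℝ))
    (hUncne : ∀ a ∈ A, (Unc a).Nonempty)
    (hUnc : ∀ a ∈ A, Unc a ⊆ stdSimplex ℝ S)
    (r : Act → ℝ)
    (hreach : ∀ a ∈ A, ∀ P ∈ Unc a, ∃ t, p ≤ P t ∧ ρ t < ρ s) :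
    ∀ V W : S → ℝ,
      |A.sup' hA (fun a => sInf ((fun P => r a + ∑ t, P t * V t) '' Unc a)) -
        A.sup' hA (fun a => sInf ((fun P => r a + ∑ t, P t * W t) '' Unc a))| ≤
      γ * w s * Finset.univ.sup' Finset.univ_nonempty (fun t => |V t - W t| / w t) := by
  intro V W
  obtain rfl : w = rankWeight p ρ := funext hw
  subst hγ
  simp only [Finset.sup'_eq_csSup_image A hA]
  exact stmt_14_general hp0.le hp1 hρ1 (hρm s) hA hUncne (fun a ha P hP => (hUnc a ha hP).1)
    (fun a ha P hP => (hUnc a ha hP).2.le) (A.finite_toSet.image r).bddAbove hreach V W
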